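/- Let a_1, …, a_k be integers with a_i ≥ 2 for all i, let s = [a_1, …, a_k]^- (so s > 1), and set r' = s/(s−1). Then for every rational number x, [x, r']^- = [x−1, −a_1, −a_2, …, −a_k]^-, i.e. x − 1/r' = [x−1, −a_1, −a_2, …, −a_k]^-. -/

import Mathlib

/-- Negative continued fraction `[c₁, …, cₙ]⁻ = c₁ - 1/[c₂, …, cₙ]⁻` of a
finite sequence of rationals (junk value `0` on the empty list). -/
def negCF : List ℚ → ℚ
  | [] => 0
  | [c] => c
  | c :: d :: t => c - 1 / negCF (d :: t)

theorem negCF_cons {l : List ℚ} (hl : l ≠ []) (c : ℚ) :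
    negCF (c :: l) = c - 1 / negCF l := by
  cases l with
  | nil => exact absurd rfl hl
  | cons d t => rfl

theorem negCF_map_neg (l : List ℚ) : negCF (l.map fun a => -a) = -negCF l := by
  induction l with
  | nil => simp [negCF]
  | cons c l ih =>
    rcases eq_or_ne l [] with rfl | hl
    · simp [negCF]
    · rw [List.map_cons, negCF_cons (by simpa using hl), negCF_cons hl, ih,
        one_div_neg_eq_neg_one_div]
      ring

theorem one_lt_negCF {l : List ℚ} (hl : l ≠ []) (h2 : ∀ a ∈ l, 2 ≤ a) : 1 < negCF l := by
  induction l with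
  | nil => exact absurd rfl hl
  | cons c l ih =>
    have hc : 2 ≤ c := h2 c List.mem_cons_self
    rcases eq_or_ne l [] with rfl | hl'
    · simp only [negCF]
      linarith
    · have h := ih hl' fun a ha => h2 a (List.mem_cons_of_mem c ha)
      have h_inv : 1 / negCF l < 1 := by
        rw [div_lt_one (by linarith)]
        exact h
      rw [negCF_cons hl']
      linarith

theorem sub_one_div_negCF_div {l : List ℚ} (hl : l ≠ []) (h : 1 < negCF l) (x : ℚ) :
    x - 1 / (negCF l / (negCF l - 1)) = negCF ((x - 1) :: l.map fun a => -a) := by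
  rw [negCF_cons (by simpa using hl), negCF_map_neg]
  have h0 : negCF l ≠ 0 := ne_of_gt (by linarith)
  have h1 : negCF l - 1 ≠ 0 := ne_of_gt (by linarith)
  field_simp
  ring

/-- Let `a₁, …, a_k` be integers `≥ 2`, let `s = [a₁, …, a_k]⁻` (so `s > 1`),
and set `r' = s/(s-1)`. Then for every rational `x`,
`[x, r']⁻ = x - 1/r' = [x-1, -a₁, -a₂, …, -a_k]⁻`. -/
theorem stmt17 (C : List ℤ) (hC : C ≠ []) (h2 : ∀ a ∈ C, 2 ≤ a) :
    1 < negCF (C.map fun a => (a : ℚ)) ∧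
    ∀ x : ℚ,
      x - 1 / (negCF (C.map fun a => (a : ℚ)) /
        (negCF (C.map fun a => (a : ℚ)) - 1)) =
      negCF ((x - 1) :: C.map fun a => (-a : ℚ)) := by
  have hL : (C >>= fun a => pure (a : ℚ)) = C.map fun a : ℤ => (a : ℚ) := by
    simp [List.map_eq_flatMap]
  rw [List.map_id', hL]
  have h_ne : (C.map fun a : ℤ => (a : ℚ)) ≠ [] := by simpa using hC
  have hs : 1 < negCF (C.map fun a : ℤ => (a : ℚ)) := by
    refine one_lt_negCF h_ne fun a ha => ?_
    obtain ⟨b, hb, rfl⟩ := List.mem_map.mp ha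
    exact_mod_cast h2 b hb
  exact ⟨hs, sub_one_div_negCF_div h_ne hs⟩
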